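/- arXiv:0908.3829 — 2 statements merged into one kernel-verified Lean document; each statement's English description precedes it below -/
import Mathlib

section
/- Let b ≥ 1, η > 0, and ψ : [0,∞) → [0,∞) be a decreasing smooth function with -η ≤ ψ'(s) ≤ 0, A := ∫₀^∞ s^{b-1}ψ(s) ds > 0, and suppose ψ(0)^{(2b+2)/b} / (6bη²(bA)^{2/b}) < d for some constant d < 1. Then ∫₀^∞ s^{b+3} ψ(s) ds ≥ (1/(b+4))(bA)^{(b+4)/b} ψ(0)^{-4/b} + (1/(3b(b+4)η²) - d/(6(b+2)²(b+4)η²)) (bA)^{(b+2)/b} ψ(0)^{(2b-2)/b} + (1/(36b(b+4)η⁴) - d/(36(b+2)²(b+4)η⁴)) A ψ(0)⁴. -/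
open MeasureTheory Set

lemma aux_bern {y p : ℝ} (hy : 0 ≤ y) (hp0 : 0 ≤ p) (hp1 : p ≤ 1) : y ^ p ≤ 1 + p * (y - 1) := by
  have := rpow_one_add_le_one_add_mul_self (s := y - 1) (by linarith) hp0 hp1
  simpa using this

lemma aux_taylor {e p : ℝ} (he : 0 ≤ e) (hp0 : 0 ≤ p) (hp1 : p ≤ 1) :
    1 + p * e - p * (1 - p) / 2 * e ^ 2 ≤ (1 + e) ^ p := by
  have hd : ∀ x : ℝ, 0 < x → HasDerivAt
      (fun x : ℝ => (1 + x) ^ p - (1 + p * x - p * (1 - p) / 2 * x ^ 2))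
      (p * (1 + x) ^ (p - 1) - (p - p * (1 - p) * x)) x := by
    intro x hx
    have h1 : HasDerivAt (fun x : ℝ => (1 + x) ^ p) (1 * p * (1 + x) ^ (p - 1)) x :=
      HasDerivAt.rpow_const ((hasDerivAt_id x).const_add 1) (Or.inl (by simp; linarith))
    have h2 : HasDerivAt (fun x : ℝ => 1 + p * x - p * (1 - p) / 2 * x ^ 2)
        (p * 1 - p * (1 - p) / 2 * ((2 : ℕ) * x ^ (2 - 1) * 1)) x :=
      (((hasDerivAt_id x).const_mul p).const_add 1).sub
        (((hasDerivAt_id x).pow 2).const_mul _)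
    refine HasDerivAt.congr_deriv (h1.sub h2) ?_
    push_cast
    ring
  have hm : MonotoneOn (fun x : ℝ => (1 + x) ^ p - (1 + p * x - p * (1 - p) / 2 * x ^ 2))
      (Ici 0) := by
    apply monotoneOn_of_deriv_nonneg (convex_Ici 0)
    · apply ContinuousOn.sub
      · apply ContinuousOn.rpow_const (by fun_prop)
        intro x hx
        exact Or.inr hp0
      · fun_prop
    · intro x hx
      rw [interior_Ici] at hx
      exact (hd x hx).differentiableAt.differentiableWithinAt
    · intro x hx
      rw [interior_Ici] at hx
      rw [(hd x hx).deriv]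
      have hx0 : (0 : ℝ) < x := hx
      have h1x : 0 < 1 + x := by linarith
      have hlog : Real.log (1 + x) ≤ x := by
        have := Real.log_le_sub_one_of_pos h1x
        linarith
      have hexp : 1 - (1 - p) * x ≤ (1 + x) ^ (p - 1) := by
        rw [Real.rpow_def_of_pos h1x]
        have := Real.add_one_le_exp (Real.log (1 + x) * (p - 1))
        nlinarith
      nlinarith
  have := hm (show (0 : ℝ) ∈ Ici 0 by simp) (show e ∈ Ici 0 from he) he
  simp at this
  linarith

lemma aux_pt {c x : ℝ} (hc : 1 ≤ c) (hx : 0 ≤ x) :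
    2 * (x - 1) ^ 2 ≤ c * x ^ (c + 2) - (c + 2) * x ^ c + 2 := by
  rcases hx.eq_or_lt with rfl | hx
  · rw [Real.zero_rpow (by linarith), Real.zero_rpow (by linarith)]; norm_num
  have h1 := aux_bern (y := x ^ (c + 1)) (p := (c - 1) / (c + 1)) (by positivity)
    (div_nonneg (by linarith) (by linarith)) (by rw [div_le_one (by linarith)]; linarith)
  have h2 := aux_bern (y := x ^ (c + 1)) (p := 1 / (c + 1)) (by positivity)
    (by positivity) (by rw [div_le_one (by linarith)]; linarith)
  have hc1 : c + 1 ≠ 0 := by linarith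
  rw [← Real.rpow_mul hx.le, mul_div_cancel₀ _ hc1] at h1 h2
  rw [Real.rpow_one] at h2
  have e1 : x ^ (c + 2) = x * x ^ (c + 1) := by
    rw [show c + 2 = 1 + (c + 1) by ring, Real.rpow_add hx, Real.rpow_one]
  have e2 : x ^ c = x * x ^ (c - 1) := by
    nth_rewrite 1 [show c = 1 + (c - 1) by ring]
    rw [Real.rpow_add hx, Real.rpow_one]
  rw [e1, e2]
  set y := x ^ (c + 1)
  set z := x ^ (c - 1)
  have h3 : (c + 2) * z + 2 * x ≤ c * y + 4 := by
    calc (c + 2) * z + 2 * x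
        ≤ (c + 2) * (1 + (c - 1) / (c + 1) * (y - 1)) + 2 * (1 + 1 / (c + 1) * (y - 1)) := by
          gcongr
      _ = c * y + 4 := by field_simp; ring
  nlinarith

lemma aux_pt' {c s t : ℝ} (hc : 1 ≤ c) (hs : 0 ≤ s) (ht : 0 < t) :
    2 * t ^ c * (s - t) ^ 2 ≤ c * s ^ (c + 2) - (c + 2) * t ^ 2 * s ^ c + 2 * t ^ (c + 2) := by
  have h := aux_pt hc (x := s / t) (by positivity)
  have e : t ^ (c + 2) = t ^ c * t ^ 2 := by rw [Real.rpow_add ht]; norm_num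
  rw [Real.div_rpow hs ht.le, Real.div_rpow hs ht.le, e] at h
  rw [e]
  have htc : 0 < t ^ c := by positivity
  have h2 := mul_le_mul_of_nonneg_left h (show 0 ≤ t ^ c * t ^ 2 by positivity)
  have e3 : t ^ c * t ^ 2 * (2 * (s / t - 1) ^ 2) = 2 * t ^ c * (s - t) ^ 2 := by
    field_simp
  have e4 : t ^ c * t ^ 2 * (c * (s ^ (c + 2) / (t ^ c * t ^ 2)) - (c + 2) * (s ^ c / t ^ c) + 2)
      = c * s ^ (c + 2) - (c + 2) * t ^ 2 * s ^ c + 2 * (t ^ c * t ^ 2) := by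
    field_simp
  linarith

lemma aux_key {c η P t : ℝ} {h : ℝ → ℝ} (hc : 1 ≤ c) (hη : 0 < η) (hP : 0 < P) (ht : 0 < t)
    (h0 : ∀ s, 0 < s → 0 ≤ h s) (h1 : ∀ s, 0 < s → h s ≤ η)
    (hi0 : IntegrableOn h (Ioi 0)) (hI0 : ∫ s in Ioi 0, h s = P)
    (hi1 : IntegrableOn (fun s => s ^ c * h s) (Ioi 0))
    (hI1 : ∫ s in Ioi 0, s ^ c * h s = P * t ^ c)
    (hi2 : IntegrableOn (fun s => s ^ (c + 2) * h s) (Ioi 0)) :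
    P * (t ^ (c + 2) + t ^ c * P ^ 2 / (6 * c * η ^ 2)) ≤ ∫ s in Ioi 0, s ^ (c + 2) * h s := by
  set r := P / (2 * η) with hr
  have hr0 : 0 < r := by positivity
  set k : ℝ → ℝ := (Icc (t - r) (t + r)).indicator (fun s => r ^ 2 - (s - t) ^ 2) with hk
  have hkint : Integrable k := by
    rw [hk, integrable_indicator_iff measurableSet_Icc]
    exact (Continuous.continuousOn (by fun_prop)).integrableOn_Icc
  have hk0 : ∀ s, 0 ≤ k s := by
    intro s
    apply indicator_nonneg
    intro x hx
    have := hx.1; have := hx.2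
    nlinarith
  have hkI : ∫ s, k s = 4 * r ^ 3 / 3 := by
    rw [hk, integral_indicator measurableSet_Icc, integral_Icc_eq_integral_Ioc,
      ← intervalIntegral.integral_of_le (by linarith)]
    have : ∀ x ∈ uIcc (t - r) (t + r), HasDerivAt (fun s => r ^ 2 * s - (s - t) ^ 3 / 3)
        (r ^ 2 - (x - t) ^ 2) x := by
      intro x _
      have := ((hasDerivAt_id x).const_mul (r ^ 2)).sub
        ((((hasDerivAt_id x).sub_const t).pow 3).div_const 3)
      refine HasDerivAt.congr_deriv this ?_
      simp
    rw [intervalIntegral.integral_eq_sub_of_hasDerivAt this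
      (Continuous.intervalIntegrable (by fun_prop) _ _)]
    ring
  have hkI' : ∫ s in Ioi 0, k s ≤ 4 * r ^ 3 / 3 := by
    rw [← hkI]
    exact setIntegral_le_integral hkint (Filter.Eventually.of_forall hk0)
  have hbath : ∀ s, 0 < s → r ^ 2 * h s - η * k s ≤ (s - t) ^ 2 * h s := by
    intro s hs
    have a0 := h0 s hs
    have a1 := h1 s hs
    by_cases hm : s ∈ Icc (t - r) (t + r)
    · have : k s = r ^ 2 - (s - t) ^ 2 := by rw [hk, indicator_of_mem hm]
      have hh := hk0 s
      rw [this] at hh ⊢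
      nlinarith
    · have : k s = 0 := by rw [hk, indicator_of_notMem hm]
      rw [this]
      have : r ^ 2 ≤ (s - t) ^ 2 := by
        rw [mem_Icc, not_and_or, not_le, not_le] at hm
        rcases hm with hm | hm <;> nlinarith
      nlinarith
  have j1 : IntegrableOn (fun s => r ^ 2 * h s) (Ioi 0) := hi0.const_mul _
  have j2 : IntegrableOn (fun s => η * k s) (Ioi 0) := hkint.integrableOn.const_mul _
  have j3 : IntegrableOn (fun s => c * (s ^ (c + 2) * h s)) (Ioi 0) := hi2.const_mul _
  have j4 : IntegrableOn (fun s => (c + 2) * t ^ 2 * (s ^ c * h s)) (Ioi 0) := hi1.const_mul _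
  have j5 : IntegrableOn (fun s => 2 * t ^ (c + 2) * h s) (Ioi 0) := hi0.const_mul _
  have j6 : IntegrableOn (fun s => r ^ 2 * h s - η * k s) (Ioi 0) := j1.sub j2
  have j7 : IntegrableOn (fun s => c * (s ^ (c + 2) * h s) - (c + 2) * t ^ 2 * (s ^ c * h s))
    (Ioi 0) := j3.sub j4
  have hint := setIntegral_mono_on (μ := volume) (s := Ioi (0 : ℝ))
    (f := fun s => 2 * t ^ c * (r ^ 2 * h s - η * k s))
    (g := fun s => c * (s ^ (c + 2) * h s) - (c + 2) * t ^ 2 * (s ^ c * h s)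
      + 2 * t ^ (c + 2) * h s)
    (j6.const_mul _) (j7.add j5) measurableSet_Ioi
    (by
      intro s hs
      have hs0 : (0 : ℝ) < s := hs
      have b1 := mul_le_mul_of_nonneg_left (hbath s hs0) (show 0 ≤ 2 * t ^ c by positivity)
      have b2 := mul_le_mul_of_nonneg_right (aux_pt' hc hs0.le ht) (h0 s hs0)
      linarith)
  rw [integral_const_mul, integral_sub j1 j2, integral_add j7 j5, integral_sub j3 j4] at hint
  simp only [integral_const_mul, hI0, hI1] at hint
  have e : t ^ (c + 2) = t ^ c * t ^ 2 := by rw [Real.rpow_add ht]; norm_num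
  set M := ∫ s in Ioi 0, s ^ (c + 2) * h s
  have htc : 0 < t ^ c := by positivity
  have h5 : 2 * t ^ c * (r ^ 2 * P - η * (4 * r ^ 3 / 3)) ≤
      c * M - (c + 2) * t ^ 2 * (P * t ^ c) + 2 * t ^ (c + 2) * P := by
    refine le_trans ?_ hint
    gcongr
  have h6 : 2 * t ^ c * (r ^ 2 * P - η * (4 * r ^ 3 / 3)) = t ^ c * P ^ 3 / (6 * η ^ 2) := by
    rw [hr]; field_simp; ring
  rw [h6, e] at h5
  rw [e]
  have h7 : P * (t ^ c * t ^ 2 + t ^ c * P ^ 2 / (6 * c * η ^ 2))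
     = (c * P * t ^ c * t ^ 2 + t ^ c * P ^ 3 / (6 * η ^ 2)) / c := by
    field_simp
  rw [h7, div_le_iff₀ (by linarith)]
  linarith

lemma aux_mom {c : ℝ} {ψ h : ℝ → ℝ} (hc : 1 ≤ c) (hnn : ∀ s, 0 ≤ s → 0 ≤ ψ s)
    (hcont : ContinuousOn ψ (Ici 0)) (hdec : AntitoneOn ψ (Ici 0))
    (hder : ∀ s, 0 < s → HasDerivAt ψ (-h s) s) (h0 : ∀ s, 0 < s → 0 ≤ h s)
    (hint : IntegrableOn (fun s => s ^ (c - 1) * ψ s) (Ioi 0)) :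
    Filter.Tendsto (fun s => s ^ c * ψ s) Filter.atTop (nhds 0) ∧
    IntegrableOn (fun s => s ^ c * h s) (Ioi 0) ∧
    ∫ s in Ioi 0, s ^ c * h s = c * ∫ s in Ioi 0, s ^ (c - 1) * ψ s := by
  set f : ℝ → ℝ := fun s => (max s 0) ^ (c - 1) * ψ (max s 0) with hf
  have hfc : Continuous f := by
    apply Continuous.mul
    · apply Continuous.rpow_const (by fun_prop)
      intro x; right; linarith
    · exact hcont.comp_continuous (by fun_prop) (fun x => by simp)
  have hfeq : EqOn (fun s => s ^ (c - 1) * ψ s) f (Ioi 0) := by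
    intro s hs
    have : max s 0 = s := max_eq_left (le_of_lt hs)
    simp [hf, this]
  have hfi : IntegrableOn f (Ioi 0) := hint.congr_fun hfeq measurableSet_Ioi
  rw [setIntegral_congr_fun measurableSet_Ioi hfeq]
  set L := ∫ s in Ioi 0, f s
  set F : ℝ → ℝ := fun s => ∫ x in (0 : ℝ)..s, f x with hF
  have hFd : ∀ s, HasDerivAt F (f s) s := fun s => hfc.integral_hasStrictDerivAt 0 s |>.hasDerivAt
  have hFl : Filter.Tendsto F Filter.atTop (nhds L) :=
    intervalIntegral_tendsto_integral_Ioi 0 hfi Filter.tendsto_id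
  have hFl2 : Filter.Tendsto (fun s => F (s / 2)) Filter.atTop (nhds L) :=
    hFl.comp (Filter.tendsto_id.atTop_div_const (by norm_num))
  have hbd : ∀ s, 0 < s → s ^ c * ψ s ≤ 2 ^ c * (F s - F (s / 2)) := by
    intro s hs
    have e1 : F s - F (s / 2) = ∫ x in (s / 2)..s, f x :=
      intervalIntegral.integral_interval_sub_left (hfc.intervalIntegrable _ _)
        (hfc.intervalIntegrable _ _)
    have e2 : ∫ x in (s / 2)..s, ((s / 2) ^ (c - 1) * ψ s) ≤ ∫ x in (s / 2)..s, f x := by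
      apply intervalIntegral.integral_mono_on (by linarith) (by simp)
        (hfc.intervalIntegrable _ _)
      intro x hx
      have hx0 : 0 < x := by linarith [hx.1]
      rw [← hfeq hx0]
      have : ψ s ≤ ψ x := hdec hx0.le hs.le hx.2
      have := hnn s hs.le
      have : (s / 2) ^ (c - 1) ≤ x ^ (c - 1) :=
        Real.rpow_le_rpow (by positivity) hx.1 (by linarith)
      dsimp only
      gcongr
    rw [intervalIntegral.integral_const, smul_eq_mul, ← e1] at e2
    have e3 : s ^ c = 2 ^ c * ((s / 2) * (s / 2) ^ (c - 1)) := by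
      rw [← Real.rpow_one_add' (by positivity) (by linarith), add_sub_cancel,
        Real.div_rpow hs.le (by norm_num)]
      field_simp
    rw [e3, mul_assoc]
    gcongr
    linarith
  have hlim : Filter.Tendsto (fun s => s ^ c * ψ s) Filter.atTop (nhds 0) := by
    have hz : Filter.Tendsto (fun s => 2 ^ c * (F s - F (s / 2))) Filter.atTop (nhds 0) := by
      simpa using (hFl.sub hFl2).const_mul ((2 : ℝ) ^ c)
    refine tendsto_of_tendsto_of_tendsto_of_le_of_le' tendsto_const_nhds hz ?_ ?_
    · filter_upwards [Filter.eventually_gt_atTop 0] with s hs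
      have := hnn s hs.le
      positivity
    · filter_upwards [Filter.eventually_gt_atTop 0] with s hs using hbd s hs
  set G : ℝ → ℝ := fun s => c * F s - s ^ c * ψ s with hG
  have hGc : ContinuousWithinAt G (Ici 0) 0 := by
    apply ContinuousWithinAt.sub
    · exact ((hFd 0).continuousAt.continuousWithinAt).const_smul c
    · apply ContinuousWithinAt.mul
      · exact (Real.continuousAt_rpow_const 0 c (Or.inr (by linarith))).continuousWithinAt
      · exact hcont 0 (by simp)
  have hGd : ∀ s ∈ Ioi (0 : ℝ), HasDerivAt G (s ^ c * h s) s := by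
    intro s hs
    have hs0 : (0 : ℝ) < s := hs
    have := ((hFd s).const_mul c).sub
      ((Real.hasDerivAt_rpow_const (p := c) (Or.inl hs0.ne')).mul (hder s hs))
    refine HasDerivAt.congr_deriv this ?_
    rw [← hfeq hs]
    ring
  have hGnn : ∀ s ∈ Ioi (0 : ℝ), 0 ≤ s ^ c * h s := by
    intro s hs
    have hs0 : (0 : ℝ) < s := hs
    have := h0 s hs
    positivity
  have hGl : Filter.Tendsto G Filter.atTop (nhds (c * L)) := by
    simpa using (hFl.const_mul c).sub hlim
  refine ⟨hlim, integrableOn_Ioi_deriv_of_nonneg hGc hGd hGnn hGl, ?_⟩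
  rw [integral_Ioi_of_hasDerivAt_of_nonneg hGc hGd hGnn hGl]
  simp [hG, hF, Real.zero_rpow (show c ≠ 0 by linarith)]

/-- Lemma 2.1 of the paper. -/
theorem lemma_2_1 (b η d : ℝ) (hb : 1 ≤ b) (hη : 0 < η) (hd : d < 1) (ψ : ℝ → ℝ)
    (hψnn : ∀ s, 0 ≤ s → 0 ≤ ψ s)
    (hψsmooth : ContDiffOn ℝ (⊤ : ℕ∞) ψ (Ici 0))
    (hψdec : AntitoneOn ψ (Ici 0))
    (hψder : ∀ s, 0 ≤ s → -η ≤ derivWithin ψ (Ici 0) s ∧ derivWithin ψ (Ici 0) s ≤ 0)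
    (hint1 : IntegrableOn (fun s => s ^ (b - 1) * ψ s) (Ioi 0))
    (hint2 : IntegrableOn (fun s => s ^ (b + 3) * ψ s) (Ioi 0))
    (A : ℝ) (hA : A = ∫ s in Ioi 0, s ^ (b - 1) * ψ s) (hApos : 0 < A)
    (hsmall : ψ 0 ^ ((2 * b + 2) / b) / (6 * b * η ^ 2 * (b * A) ^ (2 / b)) < d) :
    ∫ s in Ioi 0, s ^ (b + 3) * ψ s ≥
      (1 / (b + 4)) * (b * A) ^ ((b + 4) / b) * ψ 0 ^ (-(4 / b)) +
        (1 / (3 * b * (b + 4) * η ^ 2) - d / (6 * (b + 2) ^ 2 * (b + 4) * η ^ 2)) *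
          (b * A) ^ ((b + 2) / b) * ψ 0 ^ ((2 * b - 2) / b) +
        (1 / (36 * b * (b + 4) * η ^ 4) - d / (36 * (b + 2) ^ 2 * (b + 4) * η ^ 4)) *
          A * ψ 0 ^ 4 := by
  have hcont : ContinuousOn ψ (Ici 0) := hψsmooth.continuousOn
  set h : ℝ → ℝ := fun s => -derivWithin ψ (Ici 0) s with hh
  have hder : ∀ s, 0 < s → HasDerivAt ψ (-h s) s := by
    intro s hs
    have h1 : DifferentiableWithinAt ℝ ψ (Ici 0) s :=
      (hψsmooth.differentiableOn (by simp)) s hs.le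
    have := h1.hasDerivWithinAt.hasDerivAt (Ici_mem_nhds hs)
    simpa [hh] using this
  have h0 : ∀ s, 0 < s → 0 ≤ h s := fun s hs => by
    have := (hψder s hs.le).2
    simp only [hh]; linarith
  have h1 : ∀ s, 0 < s → h s ≤ η := fun s hs => by
    have := (hψder s hs.le).1
    simp only [hh]; linarith
  have hP : 0 < ψ 0 := by
    rcases (hψnn 0 le_rfl).eq_or_lt with h2 | h2
    · exfalso
      have : ∫ s in Ioi 0, s ^ (b - 1) * ψ s = 0 := by
        rw [setIntegral_congr_fun (g := fun _ => (0 : ℝ)) measurableSet_Ioi]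
        · simp
        · intro s hs
          have hs0 : (0 : ℝ) < s := hs
          have a1 : ψ s ≤ ψ 0 := hψdec (by simp) hs0.le hs0.le
          have a2 := hψnn s hs0.le
          have : ψ s = 0 := by linarith
          simp [this]
      linarith
    · exact h2
  have hintm : IntegrableOn (fun s => s ^ (b + 2 - 1) * ψ s) (Ioi 0) := by
    refine Integrable.mono' (hint1.add hint2) ?_ ?_
    · apply ContinuousOn.aestronglyMeasurable _ measurableSet_Ioi
      apply ContinuousOn.mul
      · apply ContinuousOn.rpow_const continuousOn_id
        intro x hx; right; linarith
      · exact hcont.mono Ioi_subset_Ici_self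
    · refine (ae_restrict_iff' measurableSet_Ioi).2 (Filter.Eventually.of_forall ?_)
      intro s hs
      have hs0 : (0 : ℝ) < s := hs
      have a2 := hψnn s hs0.le
      rw [Real.norm_of_nonneg (by positivity)]
      simp only [Pi.add_apply]
      rw [← add_mul]
      gcongr
      rcases le_total s 1 with hs1 | hs1
      · have : s ^ (b + 2 - 1) ≤ s ^ (b - 1) :=
          Real.rpow_le_rpow_of_exponent_ge hs0 hs1 (by linarith)
        have : 0 ≤ s ^ (b + 3) := by positivity
        linarith
      · have : s ^ (b + 2 - 1) ≤ s ^ (b + 3) :=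
          Real.rpow_le_rpow_of_exponent_le hs1 (by linarith)
        have : 0 ≤ s ^ (b - 1) := by positivity
        linarith
  obtain ⟨hl, hi1, hI1⟩ := aux_mom hb hψnn hcont hψdec hder h0 hint1
  obtain ⟨-, hi2, -⟩ := aux_mom (by linarith : 1 ≤ b + 2) hψnn hcont hψdec hder h0 hintm
  obtain ⟨-, hi3, hI3⟩ := aux_mom (by linarith : 1 ≤ b + 4) hψnn hcont hψdec hder h0
    (by rw [show b + 4 - 1 = b + 3 by ring]; exact hint2)
  rw [← hA] at hI1
  rw [show b + 4 - 1 = b + 3 by ring] at hI3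
  have hlim0 : Filter.Tendsto (fun s => -ψ s) Filter.atTop (nhds 0) := by
    rw [← neg_zero]
    apply Filter.Tendsto.neg
    refine tendsto_of_tendsto_of_tendsto_of_le_of_le' tendsto_const_nhds hl ?_ ?_
    · filter_upwards [Filter.eventually_gt_atTop 0] with s hs using hψnn s hs.le
    · filter_upwards [Filter.eventually_ge_atTop 1] with s hs
      have a1 := hψnn s (by linarith)
      have a2 : 1 ≤ s ^ b := Real.one_le_rpow hs (by linarith)
      nlinarith
  have hc0 : ContinuousWithinAt (fun s => -ψ s) (Ici 0) 0 := (hcont 0 (by simp)).neg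
  have hd0 : ∀ s ∈ Ioi (0 : ℝ), HasDerivAt (fun s => -ψ s) (h s) s := fun s hs => by
    exact HasDerivAt.congr_deriv (hder s hs).neg (by simp)
  have hi0 : IntegrableOn h (Ioi 0) := integrableOn_Ioi_deriv_of_nonneg hc0 hd0 h0 hlim0
  have hI0 : ∫ s in Ioi 0, h s = ψ 0 := by
    rw [integral_Ioi_of_hasDerivAt_of_nonneg hc0 hd0 h0 hlim0]; simp
  clear_value h
  set P := ψ 0 with hPdef
  set I := ∫ s in Ioi 0, s ^ (b + 3) * ψ s
  have hb0 : 0 < b := by linarith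
  set t := (b * A / P) ^ (1 / b) with ht
  have ht0 : 0 < t := by positivity
  have htb : t ^ b = b * A / P := by
    rw [ht, ← Real.rpow_mul (by positivity), one_div_mul_cancel hb0.ne', Real.rpow_one]
  have hBA : b * A = P * t ^ b := by rw [htb]; field_simp
  have hA' : A = P * t ^ b / b := by rw [← hBA]; field_simp
  have k1 := aux_key hb hη hP ht0 h0 h1 hi0 hI0 hi1 (hI1.trans hBA) hi2
  set M := ∫ s in Ioi 0, s ^ (b + 2) * h s
  set e := P ^ 2 / (6 * b * η ^ 2 * t ^ 2) with he
  have he0 : 0 < e := by positivity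
  have tb2 : t ^ (b + 2) = t ^ b * t ^ 2 := by rw [Real.rpow_add ht0]; norm_num
  have tb4 : t ^ (b + 4) = t ^ b * t ^ 4 := by rw [Real.rpow_add ht0]; norm_num
  have hM : P * t ^ (b + 2) * (1 + e) ≤ M := by
    refine le_trans (le_of_eq ?_) k1
    rw [tb2, he]; field_simp
  have hM0 : 0 < M := lt_of_lt_of_le (by positivity) hM
  set u := (M / P) ^ (1 / (b + 2)) with hu
  have hu0 : 0 < u := by positivity
  have hub : u ^ (b + 2) = M / P := by
    rw [hu, ← Real.rpow_mul (by positivity), one_div_mul_cancel (by linarith), Real.rpow_one]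
  have k2 := aux_key (by linarith : 1 ≤ b + 2) hη hP hu0 h0 h1 hi0 hI0 hi2
    (by rw [hub]; field_simp; rfl) (by rw [show b + 2 + 2 = b + 4 by ring]; exact hi3)
  rw [show b + 2 + 2 = b + 4 by ring, hI3] at k2
  have ub4 : u ^ (b + 4) = u ^ (b + 2) * u ^ 2 := by
    rw [show b + 4 = b + 2 + 2 by ring, Real.rpow_add hu0 (b + 2) 2]; norm_num
  have hMP : t ^ (b + 2) * (1 + e) ≤ u ^ (b + 2) := by
    rw [hub, le_div_iff₀ hP]; linarith
  have hu2 : t ^ 2 * (1 + e) ^ (2 / (b + 2)) ≤ u ^ 2 := by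
    have := Real.rpow_le_rpow (by positivity) hMP (show 0 ≤ 2 / (b + 2) by positivity)
    rw [Real.mul_rpow (by positivity) (by positivity), ← Real.rpow_mul ht0.le,
      ← Real.rpow_mul hu0.le, mul_div_cancel₀ _ (by linarith : b + 2 ≠ 0)] at this
    simpa using this
  have hed : e < d := by
    refine lt_of_le_of_lt (le_of_eq ?_) hsmall
    rw [hBA, Real.mul_rpow hP.le (by positivity), ← Real.rpow_mul ht0.le,
      mul_div_cancel₀ _ hb0.ne', show (2 * b + 2) / b = 2 + 2 / b by field_simp,
      Real.rpow_add hP, he]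
    have : 0 < P ^ (2 / b) := by positivity
    norm_num
    field_simp
  have hT := aux_taylor he0.le (show 0 ≤ 2 / (b + 2) by positivity)
    (by rw [div_le_one (by linarith)]; linarith)
  have hT2 : 1 + 2 / (b + 2) * e - b / (b + 2) ^ 2 * (d * e) ≤ (1 + e) ^ (2 / (b + 2)) := by
    refine le_trans ?_ hT
    have : 2 / (b + 2) * (1 - 2 / (b + 2)) / 2 = b / (b + 2) ^ 2 := by field_simp; ring
    rw [this, pow_two e]
    gcongr
  have hPe : P ^ 2 / (6 * (b + 2) * η ^ 2) = t ^ 2 * (e * b / (b + 2)) := by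
    rw [he]; field_simp
  have hfac : t ^ 2 * (1 + e - b / (b + 2) ^ 2 * (d * e)) ≤ u ^ 2 + P ^ 2 / (6 * (b + 2) * η ^ 2) := by
    rw [hPe]
    have : t ^ 2 * (1 + e - b / (b + 2) ^ 2 * (d * e)) =
      t ^ 2 * (1 + 2 / (b + 2) * e - b / (b + 2) ^ 2 * (d * e)) + t ^ 2 * (e * b / (b + 2)) := by
      field_simp; ring
    rw [this]
    gcongr
    exact le_trans (by gcongr) hu2
  have hfin : P * (t ^ (b + 2) * (1 + e)) * (t ^ 2 * (1 + e - b / (b + 2) ^ 2 * (d * e)))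
      ≤ (b + 4) * I := by
    refine le_trans ?_ k2
    rw [ub4, show P * (u ^ (b + 2) * u ^ 2 + u ^ (b + 2) * P ^ 2 / (6 * (b + 2) * η ^ 2)) =
      P * u ^ (b + 2) * (u ^ 2 + P ^ 2 / (6 * (b + 2) * η ^ 2)) by ring]
    calc _ ≤ P * (t ^ (b + 2) * (1 + e)) * (u ^ 2 + P ^ 2 / (6 * (b + 2) * η ^ 2)) := by gcongr
      _ ≤ _ := by gcongr
  have r1 : (b * A) ^ ((b + 4) / b) * P ^ (-(4 / b)) = P * (t ^ b * t ^ 4) := by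
    rw [hBA, Real.mul_rpow hP.le (by positivity), ← Real.rpow_mul ht0.le,
      mul_div_cancel₀ _ hb0.ne', tb4, mul_right_comm, ← Real.rpow_add hP,
      show (b + 4) / b + -(4 / b) = 1 by field_simp; ring, Real.rpow_one]
  have r2 : (b * A) ^ ((b + 2) / b) * P ^ ((2 * b - 2) / b) = P ^ 3 * (t ^ b * t ^ 2) := by
    rw [hBA, Real.mul_rpow hP.le (by positivity), ← Real.rpow_mul ht0.le,
      mul_div_cancel₀ _ hb0.ne', tb2, mul_right_comm, ← Real.rpow_add hP,
      show (b + 2) / b + (2 * b - 2) / b = 3 by field_simp; ring]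
    norm_num
  rw [mul_assoc _ ((b * A) ^ ((b + 4) / b)), r1, mul_assoc _ ((b * A) ^ ((b + 2) / b)), r2, hA']
  have hI : P * (t ^ (b + 2) * (1 + e)) * (t ^ 2 * (1 + e - b / (b + 2) ^ 2 * (d * e))) / (b + 4)
      ≤ I := by
    rw [div_le_iff₀ (by linarith)]; linarith
  refine le_trans (le_of_eq ?_) hI
  rw [tb2, he]
  have : 0 < t ^ b := by positivity
  generalize t ^ b = w at *
  field_simp
  ring
end

section
/- Let h : ℝⁿ → [0,∞) be a nonnegative bounded Lipschitz function with |∇h| ≤ τ almost everywhere, and let h* be its symmetric decreasing rearrangement, written h*(x) = g(|x|) with g : [0,∞) → [0, sup h] non-increasing. Then −τ ≤ g'(s) ≤ 0 for almost every s > 0. -/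
open MeasureTheory Set

open scoped ENNReal Pointwise

lemma bm_compact (A B C : Set ℝ) (hA : IsCompact A) (hB : IsCompact B) (hA0 : A.Nonempty)
    (hB0 : B.Nonempty) (hC : ∀ x ∈ A, ∀ y ∈ B, x + y ∈ C) :
    volume A + volume B ≤ volume C := by
  have ha := hA.sSup_mem hA0
  have hb := hB.sInf_mem hB0
  set a := sSup A
  set b := sInf B
  have hA2 : ∀ x ∈ A, x ≤ a := fun x hx => le_csSup hA.bddAbove hx
  have hB2 : ∀ x ∈ B, b ≤ x := fun x hx => csInf_le hB.bddBelow hx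
  have h1 : volume ((fun x => x + (-b)) ⁻¹' A) = volume A := measure_preimage_add_right _ _ _
  have h2 : volume ((fun x => (-a) + x) ⁻¹' B) = volume B := measure_preimage_add _ _ _
  rw [← h1, ← h2]
  have hd : AEDisjoint volume ((fun x => x + (-b)) ⁻¹' A) ((fun x => (-a) + x) ⁻¹' B) := by
    refine measure_mono_null (t := {a + b}) ?_ (by simp)
    rintro x ⟨hx1, hx2⟩
    have := hA2 _ hx1
    have := hB2 _ hx2
    simp only [mem_singleton_iff]
    linarith
  have hm : MeasurableSet ((fun x => (-a) + x) ⁻¹' B) :=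
    (measurable_const_add _) hB.measurableSet
  rw [← measure_union₀ hm.nullMeasurableSet hd]
  apply measure_mono
  rintro x (hx | hx)
  · have := hC _ hx _ hb
    simpa using this
  · have := hC _ ha _ hx
    simpa using this

lemma bm_meas (A B C : Set ℝ) (hA : MeasurableSet A) (hB : MeasurableSet B) (hA0 : A.Nonempty)
    (hB0 : B.Nonempty) (hC : ∀ x ∈ A, ∀ y ∈ B, x + y ∈ C) :
    volume A + volume B ≤ volume C := by
  obtain ⟨a, ha⟩ := hA0
  obtain ⟨b, hb⟩ := hB0
  have key : ∀ K ⊆ A, IsCompact K → ∀ L ⊆ B, IsCompact L →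
      volume K + volume L ≤ volume C := by
    intro K hK hKc L hL hLc
    calc volume K + volume L ≤ volume (insert a K) + volume (insert b L) := by
          gcongr <;> exact subset_insert _ _
      _ ≤ volume C := by
          refine bm_compact _ _ _ (hKc.insert a) (hLc.insert b) ⟨a, by simp⟩ ⟨b, by simp⟩ ?_
          intro x hx y hy
          exact hC x (insert_subset ha hK hx) y (insert_subset hb hL hy)
  have : ∀ K ⊆ A, IsCompact K → volume K + volume B ≤ volume C := by
    intro K hK hKc
    rcases eq_or_ne (volume C) ⊤ with h | h
    · simp [h]
    have h0 : volume K ≤ volume C := by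
      simpa using key K hK hKc ∅ (by simp) isCompact_empty
    have : volume B ≤ volume C - volume K := by
      rw [hB.measure_eq_iSup_isCompact]
      simp only [iSup_le_iff]
      intro L hL hLc
      refine ENNReal.le_sub_of_add_le_left ?_ (key K hK hKc L hL hLc)
      exact ne_top_of_le_ne_top h h0
    calc _ ≤ volume K + (volume C - volume K) := by gcongr
      _ = _ := add_tsub_cancel_of_le h0
  rcases eq_or_ne (volume C) ⊤ with h | h
  · simp [h]
  have hB' : volume B ≤ volume C := by
    simpa using this ∅ (by simp) isCompact_empty
  have : volume A ≤ volume C - volume B := by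
    rw [hA.measure_eq_iSup_isCompact]
    simp only [iSup_le_iff]
    intro L hL hLc
    refine ENNReal.le_sub_of_add_le_right (ne_top_of_le_ne_top h hB') (this L hL hLc)
  calc _ ≤ (volume C - volume B) + volume B := by gcongr
      _ = _ := tsub_add_cancel_of_le hB'

lemma bm_scaled (a b : ℝ) (ha : 0 < a) (hb : 0 < b) (A B C : Set ℝ) (hA : MeasurableSet A)
    (hB : MeasurableSet B) (hA0 : A.Nonempty)
    (hB0 : B.Nonempty) (hC : ∀ x ∈ A, ∀ y ∈ B, a * x + b * y ∈ C) :
    ENNReal.ofReal a * volume A + ENNReal.ofReal b * volume B ≤ volume C := by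
  have h1 : volume (a • A) = ENNReal.ofReal a * volume A := by
    simp [Measure.addHaar_smul, abs_of_pos ha]
  have h2 : volume (b • B) = ENNReal.ofReal b * volume B := by
    simp [Measure.addHaar_smul, abs_of_pos hb]
  rw [← h1, ← h2]
  refine bm_meas _ _ _ (hA.const_smul₀ a) (hB.const_smul₀ b) hA0.smul_set hB0.smul_set ?_
  rintro _ ⟨x, hx, rfl⟩ _ ⟨y, hy, rfl⟩
  exact hC x hx y hy

lemma pl_norm (a b : ℝ) (ha : 0 < a) (hb : 0 < b) (f g h : ℝ → ℝ) (hf : Measurable f)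
    (hg : Measurable g) (hh : Measurable h) (hf0 : ∀ x, 0 ≤ f x) (hg0 : ∀ x, 0 ≤ g x)
    (hh0 : ∀ x, 0 ≤ h x) (hf1 : ∀ x, f x ≤ 1) (hg1 : ∀ x, g x ≤ 1)
    (hfs : ∀ t < 1, ∃ x, t < f x) (hgs : ∀ t < 1, ∃ x, t < g x)
    (H : ∀ t x y, 0 < t → t < f x → t < g y → t < h (a * x + b * y)) :
    ENNReal.ofReal a * (∫⁻ x, ENNReal.ofReal (f x)) +
      ENNReal.ofReal b * (∫⁻ x, ENNReal.ofReal (g x))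
      ≤ ∫⁻ x, ENNReal.ofReal (h x) := by
  rw [lintegral_eq_lintegral_meas_lt volume (ae_of_all _ hf0) hf.aemeasurable,
    lintegral_eq_lintegral_meas_lt volume (ae_of_all _ hg0) hg.aemeasurable,
    lintegral_eq_lintegral_meas_lt volume (ae_of_all _ hh0) hh.aemeasurable]
  have mf : Measurable fun t => volume {x | t < f x} :=
    Antitone.measurable fun s t hst => measure_mono fun x hx => lt_of_le_of_lt hst hx
  have mg : Measurable fun t => volume {x | t < g x} :=
    Antitone.measurable fun s t hst => measure_mono fun x hx => lt_of_le_of_lt hst hx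
  rw [← lintegral_const_mul _ mf, ← lintegral_const_mul _ mg,
    ← lintegral_add_left (mf.const_mul _)]
  refine setLIntegral_mono' measurableSet_Ioi fun t ht => ?_
  rcases lt_or_ge t 1 with h1 | h1
  · exact bm_scaled a b ha hb _ _ _ (measurableSet_lt measurable_const hf)
      (measurableSet_lt measurable_const hg) (hfs t h1) (hgs t h1)
      fun x hx y hy => H t x y ht hx hy
  · have e1 : {x | t < f x} = ∅ := by
      ext x; simpa using (hf1 x).trans h1
    have e2 : {x | t < g x} = ∅ := by
      ext x; simpa using (hg1 x).trans h1
    simp [e1, e2]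

lemma amgm (a b : ℝ) (ha : 0 < a) (hb : 0 < b) (hab : a + b = 1) (x y : ℝ≥0∞) :
    x ^ a * y ^ b ≤ ENNReal.ofReal a * x + ENNReal.ofReal b * y := by
  have ha' : ENNReal.ofReal a ≠ 0 := by simpa using ha
  have hb' : ENNReal.ofReal b ≠ 0 := by simpa using hb
  induction x with
  | top => simp [ENNReal.mul_top ha']
  | coe x =>
    induction y with
    | top => simp [ENNReal.mul_top hb']
    | coe y =>
      have := NNReal.geom_mean_le_arith_mean2_weighted (Real.toNNReal a) (Real.toNNReal b) x y
        (by rw [← Real.toNNReal_add ha.le hb.le, hab]; simp)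
      rw [Real.coe_toNNReal _ ha.le, Real.coe_toNNReal _ hb.le] at this
      rw [← ENNReal.coe_rpow_of_nonneg _ ha.le, ← ENNReal.coe_rpow_of_nonneg _ hb.le]
      unfold ENNReal.ofReal
      exact_mod_cast this

lemma pl_bdd (a b : ℝ) (ha : 0 < a) (hb : 0 < b) (hab : a + b = 1) (f g h : ℝ → ℝ≥0∞)
    (hf : Measurable f) (hg : Measurable g) (hh : Measurable h)
    (hfb : ⨆ x, f x ≠ ⊤) (hgb : ⨆ x, g x ≠ ⊤)
    (H : ∀ x y, f x ^ a * g y ^ b ≤ h (a * x + b * y)) :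
    (∫⁻ x, f x) ^ a * (∫⁻ x, g x) ^ b ≤ ∫⁻ x, h x := by
  rcases eq_or_ne (⨆ x, f x) 0 with hM | hM
  · have : ∀ x, f x = 0 := by simpa using hM
    simp [this, ha]
  rcases eq_or_ne (⨆ x, g x) 0 with hN | hN
  · have : ∀ x, g x = 0 := by simpa using hN
    simp [this, hb]
  set M := ⨆ x, f x with hMd
  set N := ⨆ x, g x with hNd
  have hfM : ∀ x, f x ≤ M := le_iSup f
  have hgN : ∀ x, g x ≤ N := le_iSup g
  set P := M ^ a * N ^ b with hP
  have hP0 : P ≠ 0 := by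
    simp [hP, ENNReal.rpow_eq_zero_iff, hM, hN, hfb, hgb]
  have hPt : P ≠ ⊤ := by
    exact ENNReal.mul_ne_top (ENNReal.rpow_ne_top_of_nonneg ha.le hfb)
      (ENNReal.rpow_ne_top_of_nonneg hb.le hgb)
  have f1 : ∀ x, f x / M ≤ 1 := fun x => ENNReal.div_le_of_le_mul (by simpa using hfM x)
  have g1 : ∀ x, g x / N ≤ 1 := fun x => ENNReal.div_le_of_le_mul (by simpa using hgN x)
  have ft : ∀ x, f x / M ≠ ⊤ := fun x => ne_top_of_le_ne_top (by simp) (f1 x)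
  have gt : ∀ x, g x / N ≠ ⊤ := fun x => ne_top_of_le_ne_top (by simp) (g1 x)
  have ht : ∀ x, min (h x / P) 1 ≠ ⊤ := fun x => ne_top_of_le_ne_top (by simp) (min_le_right _ _)
  have sup : ∀ (u : ℝ → ℝ≥0∞) (U : ℝ≥0∞), U = ⨆ x, u x → U ≠ 0 → U ≠ ⊤ →
      (∀ x, u x / U ≠ ⊤) → ∀ t < (1 : ℝ), ∃ x, t < (u x / U).toReal := by
    intro u U hU hU0 hUt hu t ht
    have : ENNReal.ofReal t * U < U := by
      calc ENNReal.ofReal t * U < 1 * U :=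
            ENNReal.mul_lt_mul_left hU0 hUt (by simpa using ht)
        _ = U := one_mul _
    conv_rhs at this => rw [hU]
    obtain ⟨x, hx⟩ := lt_iSup_iff.1 this
    refine ⟨x, ?_⟩
    have : ENNReal.ofReal t < u x / U := by
      rw [ENNReal.lt_div_iff_mul_lt (Or.inl hU0) (Or.inl hUt)]
      exact hx
    by_contra hcon
    push Not at hcon
    have h2 := ENNReal.ofReal_le_ofReal hcon
    rw [ENNReal.ofReal_toReal (hu x)] at h2
    exact absurd this (not_lt.2 h2)
  have key := pl_norm a b ha hb (fun x => (f x / M).toReal) (fun x => (g x / N).toReal)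
    (fun x => (min (h x / P) 1).toReal) (hf.div_const _).ennreal_toReal
    (hg.div_const _).ennreal_toReal ((hh.div_const _).min measurable_const).ennreal_toReal
    (fun _ => ENNReal.toReal_nonneg) (fun _ => ENNReal.toReal_nonneg)
    (fun _ => ENNReal.toReal_nonneg)
    (fun x => ENNReal.toReal_le_of_le_ofReal zero_le_one (by simpa using f1 x))
    (fun x => ENNReal.toReal_le_of_le_ofReal zero_le_one (by simpa using g1 x))
    (sup f M hMd hM hfb ft) (sup g N hNd hN hgb gt) ?_
  · simp only [ENNReal.ofReal_toReal (ft _), ENNReal.ofReal_toReal (gt _),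
      ENNReal.ofReal_toReal (ht _)] at key
    have k2 := (amgm a b ha hb hab _ _).trans key
    have k3 : ∫⁻ x, min (h x / P) 1 ≤ ∫⁻ x, h x / P := lintegral_mono fun x => min_le_left _ _
    have k4 := k2.trans k3
    simp only [div_eq_mul_inv] at k4
    rw [lintegral_mul_const _ hf, lintegral_mul_const _ hg, lintegral_mul_const _ hh,
      ENNReal.mul_rpow_of_nonneg _ _ ha.le, ENNReal.mul_rpow_of_nonneg _ _ hb.le,
      mul_mul_mul_comm] at k4
    have k5 : (M⁻¹) ^ a * (N⁻¹) ^ b = P⁻¹ := by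
      rw [hP, ENNReal.mul_inv, ENNReal.inv_rpow, ENNReal.inv_rpow]
      · left; simp [ENNReal.rpow_eq_zero_iff, hM, hfb]
      · left; exact ENNReal.rpow_ne_top_of_nonneg ha.le hfb
    rw [k5] at k4
    exact (ENNReal.mul_le_mul_iff_left (by simpa using hPt) (by simpa using hP0)).1 k4
  · intro t x y _ hx hy
    have h1 : min (f x / M) (g y / N) ≤ min (h (a * x + b * y) / P) 1 := by
      refine le_min ?_ ((min_le_left _ _).trans (f1 x))
      set T := min (f x / M) (g y / N)
      calc T = T ^ a * T ^ b := by
            rw [← ENNReal.rpow_add_of_nonneg _ _ ha.le hb.le, hab, ENNReal.rpow_one]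
        _ ≤ (f x / M) ^ a * (g y / N) ^ b := by
            gcongr
            · exact min_le_left _ _
            · exact min_le_right _ _
        _ = (f x ^ a * g y ^ b) / P := by
            rw [ENNReal.div_rpow_of_nonneg _ _ ha.le, ENNReal.div_rpow_of_nonneg _ _ hb.le, hP]
            simp only [div_eq_mul_inv]
            rw [ENNReal.mul_inv, mul_mul_mul_comm]
            · left; simp [ENNReal.rpow_eq_zero_iff, hM, hfb]
            · left; exact ENNReal.rpow_ne_top_of_nonneg ha.le hfb
        _ ≤ _ := by gcongr; exact H x y
    refine lt_of_lt_of_le ?_ (ENNReal.toReal_mono (ht _) h1)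
    rcases min_choice (f x / M) (g y / N) with h | h <;> rw [h] <;> assumption

lemma pl (a b : ℝ) (ha : 0 < a) (hb : 0 < b) (hab : a + b = 1) (f g h : ℝ → ℝ≥0∞)
    (hf : Measurable f) (hg : Measurable g) (hh : Measurable h)
    (H : ∀ x y, f x ^ a * g y ^ b ≤ h (a * x + b * y)) :
    (∫⁻ x, f x) ^ a * (∫⁻ x, g x) ^ b ≤ ∫⁻ x, h x := by
  rcases eq_or_ne (∫⁻ x, f x) 0 with hM | hM
  · simp [hM, ha]
  rcases eq_or_ne (∫⁻ x, g x) 0 with hN | hN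
  · simp [hN, hb]
  have tr : ∀ u : ℝ → ℝ≥0∞, Measurable u → Filter.Tendsto (fun n : ℕ => ∫⁻ x, min (u x) n)
      Filter.atTop (nhds (∫⁻ x, u x)) := by
    intro u hu
    refine lintegral_tendsto_of_tendsto_of_monotone
      (fun n => (hu.min measurable_const).aemeasurable) ?_ ?_
    · refine ae_of_all _ fun x m n hmn => ?_
      dsimp only
      gcongr
    · refine ae_of_all _ fun x => ?_
      have : Filter.Tendsto (fun n : ℕ => min (u x) (n : ℝ≥0∞)) Filter.atTop
          (nhds (min (u x) ⊤)) := tendsto_const_nhds.min ENNReal.tendsto_nat_nhds_top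
      simpa using this
  have t1 := (ENNReal.continuous_rpow_const (y := a)).continuousAt.tendsto.comp (tr f hf)
  have t2 := (ENNReal.continuous_rpow_const (y := b)).continuousAt.tendsto.comp (tr g hg)
  have t3 := ENNReal.Tendsto.mul t1 (Or.inl (by simp [ENNReal.rpow_eq_zero_iff, hM, ha.le, ha.not_gt]))
    t2 (Or.inl (by simp [ENNReal.rpow_eq_zero_iff, hN, hb.le, hb.not_gt]))
  refine le_of_tendsto' t3 fun n => ?_
  refine pl_bdd a b ha hb hab _ _ h (hf.min measurable_const) (hg.min measurable_const) hh ?_ ?_ ?_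
  · exact ne_top_of_le_ne_top (ENNReal.natCast_ne_top n) (iSup_le fun x => min_le_right _ _)
  · exact ne_top_of_le_ne_top (ENNReal.natCast_ne_top n) (iSup_le fun x => min_le_right _ _)
  · intro x y
    refine le_trans ?_ (H x y)
    gcongr <;> exact min_le_left _ _

lemma bm_pi (a b : ℝ) (ha : 0 < a) (hb : 0 < b) (hab : a + b = 1) (n : ℕ) :
    ∀ (A B C : Set (Fin n → ℝ)), MeasurableSet A → MeasurableSet B → MeasurableSet C →
    (∀ x ∈ A, ∀ y ∈ B, a • x + b • y ∈ C) → volume A ^ a * volume B ^ b ≤ volume C := by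
  induction n with
  | zero =>
    intro A B C _ _ _ H
    rcases A.eq_empty_or_nonempty with rfl | ⟨x, hx⟩
    · simp [ha]
    rcases B.eq_empty_or_nonempty with rfl | ⟨y, hy⟩
    · simp [hb]
    have e : ∀ S : Set (Fin 0 → ℝ), ∀ z ∈ S, volume S = 1 := by
      intro S z hz
      have : S = univ := Subsingleton.eq_univ_of_nonempty ⟨z, hz⟩
      rw [this, Measure.volume_pi_eq_dirac 0]; simp
    rw [e A x hx, e B y hy, e C _ (H x hx y hy)]
    simp
  | succ n ih =>
    intro A B C hA hB hC H
    let e := MeasurableEquiv.piFinSuccAbove (fun _ : Fin (n + 1) => ℝ) 0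
    have he : MeasurePreserving e.symm :=
      (volume_preserving_piFinSuccAbove (fun _ : Fin (n + 1) => ℝ) 0).symm
    have vol : ∀ S : Set (Fin (n + 1) → ℝ), MeasurableSet S →
        volume S = ∫⁻ s, volume (Prod.mk s ⁻¹' (e.symm ⁻¹' S)) := by
      intro S hS
      rw [← he.measure_preimage_equiv S]
      exact Measure.prod_apply (e.symm.measurable hS)
    rw [vol A hA, vol B hB, vol C hC]
    refine pl a b ha hb hab _ _ _ (measurable_measure_prodMk_left (e.symm.measurable hA))
      (measurable_measure_prodMk_left (e.symm.measurable hB))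
      (measurable_measure_prodMk_left (e.symm.measurable hC)) ?_
    intro s t
    refine ih _ _ _ (measurable_prodMk_left (e.symm.measurable hA))
      (measurable_prodMk_left (e.symm.measurable hB))
      (measurable_prodMk_left (e.symm.measurable hC)) ?_
    intro x hx y hy
    have := H _ hx _ hy
    have e2 : e.symm (a * s + b * t, a • x + b • y) = a • e.symm (s, x) + b • e.symm (t, y) := by
      ext i
      refine Fin.cases ?_ (fun j => ?_) i <;> simp [e, MeasurableEquiv.piFinSuccAbove]
    simp only [mem_preimage]
    rw [e2]
    exact this

lemma bm_euc (a b : ℝ) (ha : 0 < a) (hb : 0 < b) (hab : a + b = 1) (n : ℕ)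
    (A B C : Set (EuclideanSpace ℝ (Fin n))) (hA : MeasurableSet A) (hB : MeasurableSet B)
    (hC : MeasurableSet C)
    (H : ∀ x ∈ A, ∀ y ∈ B, a • x + b • y ∈ C) : volume A ^ a * volume B ^ b ≤ volume C := by
  have he := PiLp.volume_preserving_toLp (Fin n)
  rw [← he.measure_preimage hA.nullMeasurableSet, ← he.measure_preimage hB.nullMeasurableSet,
    ← he.measure_preimage hC.nullMeasurableSet]
  refine bm_pi a b ha hb hab n _ _ _ (he.measurable hA) (he.measurable hB) (he.measurable hC) ?_
  intro x hx y hy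
  exact H _ hx _ hy

lemma ball_enlarge (n : ℕ) (A C : Set (EuclideanSpace ℝ (Fin n))) (hA : MeasurableSet A)
    (hC : MeasurableSet C) (s ε : ℝ) (hs : 0 < s) (hε : 0 < ε)
    (hv : volume (Metric.ball (0 : EuclideanSpace ℝ (Fin n)) s) ≤ volume A)
    (H : ∀ x ∈ A, ∀ y, ‖y‖ < ε → x + y ∈ C) :
    volume (Metric.ball (0 : EuclideanSpace ℝ (Fin n)) (s + ε)) ≤ volume C := by
  set a := s / (s + ε) with hadef
  set b := ε / (s + ε) with hbdef
  have hse : 0 < s + ε := by positivity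
  have ha : 0 < a := by positivity
  have hb : 0 < b := by positivity
  have hab : a + b = 1 := by rw [hadef, hbdef]; field_simp
  set V := volume (Metric.ball (0 : EuclideanSpace ℝ (Fin n)) (s + ε))
  have h1 : V ≤ volume (a⁻¹ • A) := by
    have e : s + ε = a⁻¹ * s := by rw [hadef]; field_simp
    rw [Measure.addHaar_smul, abs_of_pos (by positivity)]
    simp only [V]
    rw [e, Measure.addHaar_ball_mul_of_pos _ _ (by positivity)]
    gcongr
  have h2 := bm_euc a b ha hb hab n (a⁻¹ • A) (Metric.ball 0 (s + ε)) C
    (hA.const_smul₀ _) measurableSet_ball hC ?_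
  · calc V = V ^ a * V ^ b := by
            rw [← ENNReal.rpow_add_of_nonneg _ _ ha.le hb.le, hab, ENNReal.rpow_one]
      _ ≤ _ := by gcongr
      _ ≤ _ := h2
  · rintro _ ⟨x, hx, rfl⟩ y hy
    simp only [smul_smul, mul_inv_cancel₀ ha.ne', one_smul]
    refine H x hx _ ?_
    rw [mem_ball_zero_iff] at hy
    rw [norm_smul, Real.norm_of_nonneg hb.le]
    calc b * ‖y‖ < b * (s + ε) := by gcongr
      _ = ε := by rw [hbdef]; field_simp

/-- Derivative bound (2.4) for the radial profile of the symmetric decreasing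
rearrangement of a Lipschitz function. -/
theorem rearrangement_profile_deriv_bound (n : ℕ) (hn : 1 ≤ n) (τ : ℝ) (hτ : 0 ≤ τ)
    (h : EuclideanSpace ℝ (Fin n) → ℝ) (hnn : ∀ x, 0 ≤ h x)
    (hbdd : BddAbove (Set.range h)) (hlip : LipschitzWith (Real.toNNReal τ) h)
    (g : ℝ → ℝ) (hg : Antitone g) (hgnn : ∀ s, 0 ≤ g s)
    (hgsup : ∀ s, g s ≤ ⨆ x, h x)
    (hequi : ∀ t, 0 < t →
      volume {x | t < h x} = volume {x : EuclideanSpace ℝ (Fin n) | t < g ‖x‖}) :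
    ∀ᵐ s : ℝ, 0 < s → -τ ≤ deriv g s ∧ deriv g s ≤ 0 := by
  have : NeZero n := ⟨by omega⟩
  have hmeas : ∀ t, MeasurableSet {x | t < h x} := fun t =>
    measurableSet_lt measurable_const hlip.continuous.measurable
  -- one-step estimate
  have step : ∀ s ε r t : ℝ, 0 < s → 0 < ε → 0 ≤ r → r < s + ε → 0 < t → t < g s →
      t - τ * ε ≤ g r := by
    intro s ε r t hs hε hr hrs ht hts
    rcases le_or_gt (t - τ * ε) 0 with h0 | h0
    · exact h0.trans (hgnn r)
    by_contra hcon
    push Not at hcon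
    have hA : volume (Metric.ball (0 : EuclideanSpace ℝ (Fin n)) s) ≤ volume {x | t < h x} := by
      rw [hequi t ht]
      refine measure_mono fun x hx => ?_
      rw [mem_ball_zero_iff] at hx
      exact hts.trans_le (hg hx.le)
    have hC := ball_enlarge n _ _ (hmeas t) (hmeas (t - τ * ε)) s ε hs hε hA ?_
    · rw [hequi _ h0] at hC
      have h3 : volume {x : EuclideanSpace ℝ (Fin n) | t - τ * ε < g ‖x‖} ≤
          volume (Metric.ball (0 : EuclideanSpace ℝ (Fin n)) r) := by
        refine measure_mono fun x hx => ?_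
        rw [mem_ball_zero_iff]
        by_contra hle
        push Not at hle
        have := hg hle
        simp only [mem_ofPred_eq] at hx
        linarith
      have h4 := hC.trans h3
      rw [Measure.addHaar_ball _ _ (by positivity), Measure.addHaar_ball _ _ hr] at h4
      rw [ENNReal.mul_le_mul_iff_left (Metric.measure_ball_pos _ _ one_pos).ne'
        measure_ball_lt_top.ne, ENNReal.ofReal_le_ofReal_iff (by positivity)] at h4
      have : r ^ Module.finrank ℝ (EuclideanSpace ℝ (Fin n)) <
          (s + ε) ^ Module.finrank ℝ (EuclideanSpace ℝ (Fin n)) :=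
        pow_lt_pow_left₀ hrs hr (by simp; omega)
      linarith
    · intro x hx y hy
      simp only [mem_ofPred_eq] at hx ⊢
      have := hlip.dist_le_mul x (x + y)
      rw [Real.coe_toNNReal _ hτ, Real.dist_eq] at this
      simp only [dist_self_add_right] at this
      have h5 := (le_abs_self _).trans this
      have : τ * ‖y‖ ≤ τ * ε := by gcongr
      linarith
  have lip : ∀ s r : ℝ, 0 < s → s ≤ r → g s - τ * (r - s) ≤ g r := by
    intro s r hs hsr
    have h1 : ∀ δ > 0, g s - τ * (r - s) ≤ g r + (δ + τ * δ) := by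
      intro δ hδ
      rcases le_or_gt (g s - δ) 0 with h0 | h0
      · have := hgnn r
        have : 0 ≤ τ * (r - s) := mul_nonneg hτ (by linarith)
        have : 0 ≤ τ * δ := by positivity
        linarith
      · have := step s (r - s + δ) r (g s - δ) hs (by linarith) (by linarith) (by linarith) h0
          (by linarith)
        linarith
    have hl : Filter.Tendsto (fun δ : ℝ => g r + (δ + τ * δ)) (nhdsWithin 0 (Ioi 0))
        (nhds (g r + (0 + τ * 0))) := by
      refine Filter.Tendsto.mono_left (Continuous.tendsto (by fun_prop) 0) nhdsWithin_le_nhds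
    have := ge_of_tendsto hl (Filter.eventually_of_mem self_mem_nhdsWithin h1)
    simpa using this
  refine ae_of_all _ fun s hs => ⟨?_, hg.deriv_nonpos⟩
  by_cases hd : DifferentiableAt ℝ g s
  · have hD := hd.hasDerivAt.hasDerivWithinAt (s := Ioi s)
    rw [hasDerivWithinAt_iff_tendsto_slope' (by simp)] at hD
    refine ge_of_tendsto hD (Filter.eventually_of_mem self_mem_nhdsWithin fun r hr => ?_)
    have hr' : 0 < r - s := sub_pos.2 hr
    have := lip s r hs (le_of_lt hr)
    rw [slope_def_field, le_div_iff₀ hr']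
    linarith
  · rw [deriv_zero_of_not_differentiableAt hd]
    linarith
end
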